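/- arXiv:math/0201051 — 4 statements merged into one kernel-verified Lean document; each statement's English description precedes it below -/
import Mathlib

section
/- Let X be a separable metric space. Suppose we are given a predicate Ψ : X × X × [0,∞) × [0,∞) → Prop together with functions δ : X → (0,∞), Q : X → [0,∞), R : X × [0,∞) → [0,∞) and ε : X × [0,∞) → (0,∞) such that for all x ∈ X and all q ≥ Q(x): for all y ∈ X, all t ≥ Q(x) and all s ≥ R(x,q), if t ∈ (q − ε(x,q), q + ε(x,q)) and d(x,y) < δ(x), then Ψ(x,y,s,t) holds. Then there exist a continuous function α : X → [0,∞) and a continuous increasing function φ : [0,∞) → [0,∞) such that for every y ∈ X there exists x ∈ X such that for all t ≥ α(y) and all s ≥ φ(t), both d(x,y) < δ(x) and Ψ(x,y,s,t) hold. -/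
open Filter Topology TopologicalSpace

/-- Every monotone real function is dominated by a continuous monotone one. -/
theorem Monotone.exists_continuous_monotone_ge {g : ℝ → ℝ} (hg : Monotone g) :
    ∃ f : ℝ → ℝ, Continuous f ∧ Monotone f ∧ g ≤ f := by
  have hint : ∀ a b, IntervalIntegrable g MeasureTheory.volume a b :=
    fun a b => hg.intervalIntegrable
  have hshift : ∀ t, IntervalIntegrable (fun u => g (u + t)) MeasureTheory.volume 0 1 :=
    fun t => Monotone.intervalIntegrable fun u v huv => hg (by linarith)
  have hcont := intervalIntegral.continuous_primitive hint 0
  refine ⟨fun t => ∫ u in (0 : ℝ)..1, g (u + t), ?_, ?_, ?_⟩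
  · have heq : (fun t => ∫ u in (0 : ℝ)..1, g (u + t)) =
        fun t => (∫ u in (0 : ℝ)..(1 + t), g u) - ∫ u in (0 : ℝ)..t, g u := by
      funext t
      rw [intervalIntegral.integral_comp_add_right, zero_add,
        intervalIntegral.integral_interval_sub_left (hint _ _) (hint _ _)]
    rw [heq]
    exact (hcont.comp (continuous_const.add continuous_id)).sub hcont
  · intro t t' htt'
    exact intervalIntegral.integral_mono_on zero_le_one (hshift t) (hshift t')
      fun u _ => hg (by linarith)
  · intro t
    have h := intervalIntegral.integral_mono_on zero_le_one
      (intervalIntegrable_const (c := g t)) (hshift t) fun u hu => hg (by linarith [hu.1])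
    simpa using h

/-- Every monotone sequence in `ℝ≥0` is dominated, along `⌈·⌉₊`, by a continuous monotone function. -/
theorem NNReal.exists_continuous_monotone_ge_natCeil {b : ℕ → NNReal} (hb : Monotone b) :
    ∃ φ : NNReal → NNReal, Continuous φ ∧ Monotone φ ∧ ∀ t, b ⌈t⌉₊ ≤ φ t := by
  have hg : Monotone fun t : ℝ => (b ⌈t⌉₊ : ℝ) := fun t t' h =>
    NNReal.coe_le_coe.2 (hb (Nat.ceil_mono h))
  obtain ⟨f, hfc, hfm, hf⟩ := hg.exists_continuous_monotone_ge
  refine ⟨fun t => (f t).toNNReal,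
    continuous_real_toNNReal.comp (hfc.comp NNReal.continuous_coe),
    fun t t' h => Real.toNNReal_mono (hfm (NNReal.coe_le_coe.2 h)), fun t => ?_⟩
  have h : (b ⌈(t : ℝ)⌉₊ : ℝ) ≤ f t := hf t
  have hceil : ⌈(t : ℝ)⌉₊ = ⌈t⌉₊ :=
    eq_of_forall_ge_iff fun n => by simp only [Nat.ceil_le]; norm_cast
  rw [hceil] at h
  exact NNReal.le_toNNReal_of_coe_le h

/-- If each point of a compact set has a neighborhood in which `P t s` holds for all large `s`,
then `P t s` holds for all large `s` uniformly over the set. -/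
theorem IsCompact.exists_forall_ge_of_locally {T S : Type*} [TopologicalSpace T]
    [LinearOrder S] [Nonempty S] {K : Set T} (hK : IsCompact K) {P : T → S → Prop}
    (h : ∀ q ∈ K, ∃ r, ∀ᶠ t in 𝓝[K] q, ∀ s, r ≤ s → P t s) :
    ∃ r, ∀ t ∈ K, ∀ s, r ≤ s → P t s := by
  refine hK.induction_on (p := fun A => ∃ r, ∀ t ∈ A, ∀ s, r ≤ s → P t s) ?_ ?_ ?_ ?_
  · exact ⟨Classical.arbitrary S, by simp⟩
  · rintro A B hAB ⟨r, hr⟩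
    exact ⟨r, fun t ht => hr t (hAB ht)⟩
  · rintro A B ⟨r, hr⟩ ⟨r', hr'⟩
    refine ⟨max r r', ?_⟩
    rintro t (ht | ht) s hs
    · exact hr t ht s ((le_max_left _ _).trans hs)
    · exact hr' t ht s ((le_max_right _ _).trans hs)
  · intro q hq
    obtain ⟨r, hr⟩ := h q hq
    exact ⟨_, hr, r, fun t ht => ht⟩

/-- **Lemma 2.1 (Lemma Y).** Let `X` be a separable metric space and `Ψ` a predicate on
`X × X × [0,∞) × [0,∞)`.  Suppose that for every `x ∈ X` there are `δ x > 0` and `Q x ≥ 0`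
such that for every `q ≥ Q x` there are `R x q ≥ 0` and `ε x q > 0` with: for every `y`,
every `t ≥ Q x` and every `s ≥ R x q`, if `t ∈ (q - ε x q, q + ε x q)` and `d(x,y) < δ x`
then `Ψ x y s t`.  Then there are a continuous `α : X → [0,∞)` and a continuous increasing
`φ : [0,∞) → [0,∞)` such that every `y` admits an `x` with `d(x,y) < δ x` and `Ψ x y s t`
for all `t ≥ α y` and `s ≥ φ t`.  Here `[0,∞)` is modelled by `ℝ≥0`, and
`t ∈ (q - ε, q + ε)` is expressed as `dist t q < ε`. -/
theorem lemma_Y {X : Type*} [MetricSpace X] [SeparableSpace X]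
    (Ψ : X → X → NNReal → NNReal → Prop)
    (δ : X → ℝ) (hδ : ∀ x, 0 < δ x)
    (Q : X → NNReal)
    (R : X → NNReal → NNReal)
    (ε : X → NNReal → ℝ) (hε : ∀ x q, Q x ≤ q → 0 < ε x q)
    (H : ∀ (x : X) (q : NNReal), Q x ≤ q →
      ∀ (y : X) (t : NNReal), Q x ≤ t → ∀ s : NNReal, R x q ≤ s →
        dist t q < ε x q → dist x y < δ x → Ψ x y s t) :
    ∃ α : X → NNReal, ∃ φ : NNReal → NNReal,
      Continuous α ∧ Continuous φ ∧ Monotone φ ∧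
      ∀ y : X, ∃ x : X, ∀ t : NNReal, α y ≤ t → ∀ s : NNReal, φ t ≤ s →
        dist x y < δ x ∧ Ψ x y s t := by
  rcases isEmpty_or_nonempty X with hX | hX
  · exact ⟨fun _ => 0, fun _ => 0, continuous_const, continuous_const, monotone_const,
      fun y => isEmptyElim y⟩
  have : SecondCountableTopology X := UniformSpace.secondCountable_of_separable X
  obtain ⟨c, hc, hcover⟩ :=
    TopologicalSpace.countable_cover_nhds fun x : X => Metric.ball_mem_nhds x (hδ x)
  have hcne : c.Nonempty := by
    by_contra hne
    rw [Set.not_nonempty_iff_eq_empty] at hne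
    exact Set.empty_ne_univ (by simpa [hne] using hcover)
  obtain ⟨x, rfl⟩ := hc.exists_eq_range hcne
  have hx : ∀ y, ∃ n, dist (x n) y < δ (x n) := fun y => by
    have hy : y ∈ ⋃ z ∈ Set.range x, Metric.ball z (δ z) := hcover ▸ Set.mem_univ y
    simpa [dist_comm] using hy
  have hbound : ∀ n k : ℕ, ∃ r : NNReal, ∀ t ∈ Set.Icc (Q (x n)) (k : NNReal), ∀ s, r ≤ s →
      ∀ y, dist (x n) y < δ (x n) → Ψ (x n) y s t := fun n k => by
    refine isCompact_Icc.exists_forall_ge_of_locally fun q hq => ⟨R (x n) q, ?_⟩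
    filter_upwards [self_mem_nhdsWithin,
      mem_nhdsWithin_of_mem_nhds (Metric.ball_mem_nhds q (hε (x n) q hq.1))] with t ht htq s hs y hy
    exact H (x n) q hq.1 y t ht.1 s hs htq hy
  choose C hC using hbound
  obtain ⟨φ, hφc, hφm, hφ⟩ := NNReal.exists_continuous_monotone_ge_natCeil
    (b := fun N => ∑ p ∈ Finset.range (N + 1) ×ˢ Finset.range (N + 1), C p.1 p.2)
    fun N N' h => Finset.sum_le_sum_of_subset (by gcongr)
  obtain ⟨α, hα⟩ := exists_continuous_forall_mem_convex_of_local_const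
    (t := fun y : X => {a : ℝ | ∃ n, dist (x n) y < δ (x n) ∧ (n : ℝ) ≤ a ∧ (Q (x n) : ℝ) ≤ a})
    (fun y => by
      have hup : IsUpperSet
          {a : ℝ | ∃ n, dist (x n) y < δ (x n) ∧ (n : ℝ) ≤ a ∧ (Q (x n) : ℝ) ≤ a} := by
        rintro a a' haa' ⟨n, hn, hna, hQ⟩
        exact ⟨n, hn, hna.trans haa', hQ.trans haa'⟩
      exact hup.ordConnected.convex)
    (fun y => by
      obtain ⟨n, hn⟩ := hx y
      refine ⟨max n (Q (x n)), ?_⟩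
      filter_upwards [Metric.isOpen_ball.mem_nhds (Metric.mem_ball'.2 hn)] with z hz
      exact ⟨n, Metric.mem_ball'.1 hz, le_max_left _ _, le_max_right _ _⟩)
  refine ⟨fun y => (α y).toNNReal, φ, continuous_real_toNNReal.comp α.continuous, hφc, hφm,
    fun y => ?_⟩
  obtain ⟨n, hn, hnα, hQα⟩ := hα y
  refine ⟨x n, fun t ht s hs => ⟨hn, ?_⟩⟩
  have hαt : α y ≤ t := Real.toNNReal_le_iff_le_coe.1 ht
  have hnt : n ≤ ⌈t⌉₊ := by
    have : (n : NNReal) ≤ t := by exact_mod_cast hnα.trans hαt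
    exact_mod_cast this.trans (Nat.le_ceil t)
  refine hC n ⌈t⌉₊ t ⟨by exact_mod_cast hQα.trans hαt, Nat.le_ceil t⟩ s ?_ y hn
  refine le_trans ?_ ((hφ t).trans hs)
  exact Finset.single_le_sum (f := fun p : ℕ × ℕ => C p.1 p.2) (fun _ _ => zero_le)
    (a := (n, ⌈t⌉₊)) (by simp; omega)
end

section
/- For each n ∈ ℕ let X_n be a separable metric space, and suppose given predicates Ψ_n : X_n × X_n × [0,∞) × [0,∞) → Prop together with functions δ_n : X_n → (0,∞), Q_n : X_n → [0,∞), R_n : X_n × [0,∞) → [0,∞) and ε_n : X_n × [0,∞) → (0,∞) such that for every n, every x ∈ X_n and every q ≥ Q_n(x): for all y ∈ X_n, all t ≥ Q_n(x) and all s ≥ R_n(x,q), if t ∈ (q − ε_n(x,q), q + ε_n(x,q)) and d(x,y) < δ_n(x), then Ψ_n(x,y,s,t). Then there exist a single continuous increasing function ψ : [0,∞) → [0,∞) and continuous functions β_n : X_n → [0,∞) such that for every n ∈ ℕ and every y ∈ X_n there exists x ∈ X_n such that for all t ≥ β_n(y) and all s ≥ ψ(t), both d(x,y) < δ_n(x)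 and Ψ_n(x,y,s,t) hold. -/
open Filter Topology TopologicalSpace

/-- Any sequence in `ℝ≥0` is dominated, at `⌈t⌉₊`, by a continuous monotone function of `t`. -/
theorem exists_continuous_monotone_ge_ceil (g : ℕ → NNReal) :
    ∃ ψ : NNReal → NNReal, Continuous ψ ∧ Monotone ψ ∧ ∀ t, g ⌈t⌉₊ ≤ ψ t := by
  have hsupp : ∀ (t : NNReal) (k : ℕ), g k * (t + 2 - k) ≠ 0 → (k : NNReal) < t + 2 := by
    intro t k h
    by_contra! hk
    exact h (by rw [tsub_eq_zero_of_le hk, mul_zero])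
  have hfin : ∀ t : NNReal, (Function.support fun k : ℕ => g k * (t + 2 - k)).Finite := by
    intro t
    refine (Set.finite_lt_nat ⌈t + 2⌉₊).subset fun k hk => ?_
    exact Nat.lt_ceil.2 (hsupp t k hk)
  refine ⟨fun t => ∑ᶠ k : ℕ, g k * (t + 2 - k), ?_, ?_, ?_⟩
  · refine continuous_finsum (fun k => by fun_prop) fun t => ?_
    refine ⟨Set.Iio (t + 1), Iio_mem_nhds (by simp), ?_⟩
    refine (Set.finite_lt_nat ⌈t + 3⌉₊).subset ?_
    rintro k ⟨u, hu, hut⟩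
    refine Nat.lt_ceil.2 ((hsupp u k hu).trans_le ?_)
    calc u + 2 ≤ t + 1 + 2 := by gcongr; exact (Set.mem_Iio.1 hut).le
      _ = t + 3 := by ring
  · intro t u htu
    refine finsum_le_finsum' (hfin t) (hfin u) fun k => ?_
    dsimp only
    gcongr
  · intro t
    have h1 : (1 : NNReal) ≤ t + 2 - (⌈t⌉₊ : NNReal) := by
      refine le_tsub_of_add_le_left ?_
      calc (⌈t⌉₊ : NNReal) + 1 ≤ t + 1 + 1 := by
            gcongr; exact (Nat.ceil_lt_add_one zero_le).le
        _ = t + 2 := by ring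
    calc g ⌈t⌉₊ ≤ g ⌈t⌉₊ * (t + 2 - (⌈t⌉₊ : NNReal)) := le_mul_of_one_le_right zero_le h1
      _ ≤ _ := single_le_finsum (f := fun k : ℕ => g k * (t + 2 - k)) ⌈t⌉₊ (hfin t)
        fun _ => zero_le

/-- A countable family of sequences is eventually dominated by one continuous monotone function. -/
theorem exists_continuous_monotone_eventually_ge {ι : Type*} [Countable ι]
    (f : ι → ℕ → NNReal) :
    ∃ ψ : NNReal → NNReal, Continuous ψ ∧ Monotone ψ ∧
      ∀ p, ∃ N : ℕ, ∀ t : NNReal, (N : NNReal) ≤ t → f p ⌈t⌉₊ ≤ ψ t := by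
  obtain ⟨e, he⟩ := exists_injective_nat ι
  obtain ⟨ψ, hc, hm, hψ⟩ := exists_continuous_monotone_ge_ceil
    fun k => ∑ i ∈ Finset.range (k + 1), Function.extend e f 0 i k
  refine ⟨ψ, hc, hm, fun p => ⟨e p, fun t ht => le_trans ?_ (hψ t)⟩⟩
  have hmem : e p ∈ Finset.range (⌈t⌉₊ + 1) := by
    rw [Finset.mem_range, Nat.lt_succ_iff]
    exact_mod_cast ht.trans (Nat.le_ceil t)
  calc f p ⌈t⌉₊ = Function.extend e f 0 (e p) ⌈t⌉₊ := by rw [he.extend_apply]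
    _ ≤ _ := Finset.single_le_sum (f := fun i => Function.extend e f 0 i ⌈t⌉₊)
      (fun _ _ => zero_le) hmem

/-- A bound that is locally uniform in `t ≥ a` is uniform on `[a, b]`. -/
theorem exists_uniform_bound_on_Icc {P : NNReal → NNReal → Prop} {a : NNReal}
    {r : NNReal → NNReal} {ε : NNReal → ℝ} (hε : ∀ q, a ≤ q → 0 < ε q)
    (h : ∀ q, a ≤ q → ∀ t, a ≤ t → ∀ s, r q ≤ s → dist t q < ε q → P s t) (b : NNReal) :
    ∃ M : NNReal, ∀ t ∈ Set.Icc a b, ∀ s, M ≤ s → P s t := by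
  refine (isCompact_Icc (a := a) (b := b)).induction_on
    (p := fun S => ∃ M : NNReal, ∀ t ∈ S, ∀ s, M ≤ s → P s t) ⟨0, by simp⟩ ?_ ?_ ?_
  · rintro S T hST ⟨M, hM⟩
    exact ⟨M, fun t ht => hM t (hST ht)⟩
  · rintro S T ⟨M, hM⟩ ⟨M', hM'⟩
    refine ⟨max M M', ?_⟩
    rintro t (ht | ht) s hs
    · exact hM t ht s ((le_max_left _ _).trans hs)
    · exact hM' t ht s ((le_max_right _ _).trans hs)
  · intro q hq
    refine ⟨Set.Icc a b ∩ Metric.ball q (ε q), inter_mem_nhdsWithin _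
      (Metric.ball_mem_nhds q (hε q hq.1)), r q, ?_⟩
    rintro t ⟨ht, htq⟩ s hs
    exact h q hq.1 t ht.1 s hs htq

/-- Given an open cover `U` with a constant attached to each member, some continuous function is,
at each point, at least the constant of some member containing that point. -/
theorem exists_continuous_ge_of_open_cover {Y ι : Type*} [MetricSpace Y] {U : ι → Set Y}
    (hU : ∀ i, IsOpen (U i)) (hcover : ∀ y, ∃ i, y ∈ U i) (c : ι → NNReal) :
    ∃ β : Y → NNReal, Continuous β ∧ ∀ y, ∃ i, y ∈ U i ∧ c i ≤ β y := by
  obtain ⟨g, hg⟩ := exists_continuous_forall_mem_convex_of_local_const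
    (t := fun y => {r : ℝ | ∃ i, y ∈ U i ∧ (c i : ℝ) ≤ r})
    (fun y => Set.OrdConnected.convex (IsUpperSet.ordConnected
      fun r r' hr ⟨i, hi, hc⟩ => ⟨i, hi, hc.trans hr⟩))
    (fun y => by
      obtain ⟨i, hi⟩ := hcover y
      exact ⟨c i, Filter.mem_of_superset ((hU i).mem_nhds hi) fun z hz => ⟨i, hz, le_rfl⟩⟩)
  refine ⟨fun y => (g y).toNNReal, by fun_prop, fun y => ?_⟩
  obtain ⟨i, hi, hc⟩ := hg y
  exact ⟨i, hi, NNReal.le_toNNReal_of_coe_le hc⟩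

/-- **Lemma 2.2 (Lemma YY).** For each `n ∈ ℕ` let `X n` be a separable metric space, and
suppose the predicates `Ψ n` satisfy (uniformly in the given data `δ n`, `Q n`, `R n`, `ε n`)
the hypothesis of Lemma Y.  Then there are a single continuous increasing
`ψ : [0,∞) → [0,∞)` and continuous functions `β n : X n → [0,∞)` such that for every `n`
and every `y : X n` there is `x : X n` with `d(x,y) < δ n x` and `Ψ n x y s t` for all
`t ≥ β n y` and `s ≥ ψ t`.  Here `[0,∞)` is modelled by `ℝ≥0`, and `t ∈ (q - ε, q + ε)` is
expressed as `dist t q < ε`. -/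
theorem lemma_YY {X : ℕ → Type*} [∀ n, MetricSpace (X n)] [∀ n, SeparableSpace (X n)]
    (Ψ : ∀ n, X n → X n → NNReal → NNReal → Prop)
    (δ : ∀ n, X n → ℝ) (hδ : ∀ n x, 0 < δ n x)
    (Q : ∀ n, X n → NNReal)
    (R : ∀ n, X n → NNReal → NNReal)
    (ε : ∀ n, X n → NNReal → ℝ) (hε : ∀ n x q, Q n x ≤ q → 0 < ε n x q)
    (H : ∀ (n : ℕ) (x : X n) (q : NNReal), Q n x ≤ q →
      ∀ (y : X n) (t : NNReal), Q n x ≤ t → ∀ s : NNReal, R n x q ≤ s →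
        dist t q < ε n x q → dist x y < δ n x → Ψ n x y s t) :
    ∃ ψ : NNReal → NNReal, ∃ β : ∀ n, X n → NNReal,
      Continuous ψ ∧ Monotone ψ ∧ (∀ n, Continuous (β n)) ∧
      ∀ (n : ℕ) (y : X n), ∃ x : X n, ∀ t : NNReal, β n y ≤ t → ∀ s : NNReal, ψ t ≤ s →
        dist x y < δ n x ∧ Ψ n x y s t := by
  have hunif : ∀ n x, ∃ M : ℕ → NNReal, ∀ k : ℕ, ∀ t ∈ Set.Icc (Q n x) k, ∀ s, M k ≤ s →
      ∀ y, dist x y < δ n x → Ψ n x y s t := fun n x =>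
    Classical.axiomOfChoice fun k : ℕ =>
      exists_uniform_bound_on_Icc (P := fun s t => ∀ y, dist x y < δ n x → Ψ n x y s t)
        (hε n x) (fun q hq t ht s hs htq y hy => H n x q hq y t ht s hs htq hy) k
  choose M hM using hunif
  have hcover : ∀ n, ∃ S : Set (X n), S.Countable ∧ ⋃ x ∈ S, Metric.ball x (δ n x) = Set.univ := by
    intro n
    have : SecondCountableTopology (X n) := UniformSpace.secondCountable_of_separable (X n)
    exact TopologicalSpace.countable_cover_nhds fun x => Metric.ball_mem_nhds x (hδ n x)
  choose S hS hSU using hcover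
  have (n : ℕ) : Countable (S n) := (hS n).to_subtype
  obtain ⟨ψ, hψc, hψm, hψ⟩ := exists_continuous_monotone_eventually_ge
    fun p : Σ n, S n => M p.1 p.2
  choose N hN using hψ
  have hβ : ∀ n, ∃ β : X n → NNReal, Continuous β ∧ ∀ y, ∃ x : S n,
      y ∈ Metric.ball (x : X n) (δ n x) ∧ max (Q n x) (N ⟨n, x⟩) ≤ β y := by
    intro n
    refine exists_continuous_ge_of_open_cover (fun x => Metric.isOpen_ball) (fun y => ?_) _
    have hy : y ∈ ⋃ x ∈ S n, Metric.ball x (δ n x) := by rw [hSU n]; trivial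
    obtain ⟨x, hx, hxy⟩ := Set.mem_iUnion₂.1 hy
    exact ⟨⟨x, hx⟩, hxy⟩
  choose β hβc hβ using hβ
  refine ⟨ψ, β, hψc, hψm, hβc, fun n y => ?_⟩
  obtain ⟨x, hxy, hx⟩ := hβ n y
  rw [Metric.mem_ball'] at hxy
  refine ⟨x, fun t ht s hs => ⟨by simpa using hxy, ?_⟩⟩
  have hxt := max_le_iff.1 (hx.trans ht)
  exact hM n x ⌈t⌉₊ t ⟨hxt.1, Nat.le_ceil t⟩ s ((hN ⟨n, x⟩ t hxt.2).trans hs) y hxy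
end

section
/- Let A be a *-algebra equipped with inverse square root data (V_A, θ_A). If a ∈ A satisfies a* • a ∈ V_A and a • a* ∈ V_A, then a is quasi-invertible and the element u = a • θ_A(a* • a) is quasi-unitary, i.e. u • u* = u* • u = 0. -/
/-- The quasi-product `a • b = a + b + a * b` on a (possibly non-unital) ring. -/
def qmul {R : Type*} [NonUnitalRing R] (a b : R) : R := a + b + a * b

section QuasiProduct

variable {R : Type*} [NonUnitalRing R]

theorem qmul_assoc (a b c : R) : qmul (qmul a b) c = qmul a (qmul b c) := by
  simp only [qmul, mul_add, add_mul, mul_assoc]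
  abel

theorem qmul_zero (a : R) : qmul a 0 = a := by simp [qmul]

theorem zero_qmul (a : R) : qmul 0 a = a := by simp [qmul]

theorem star_qmul [StarRing R] (a b : R) : star (qmul a b) = qmul (star b) (star a) := by
  simp only [qmul, star_add, star_mul]
  abel

theorem eq_of_qmul_eq_zero {a b c : R} (hb : qmul b a = 0) (hc : qmul a c = 0) : b = c := by
  rw [← qmul_zero b, ← hc, ← qmul_assoc, hb, zero_qmul]

end QuasiProduct

/-- **Lemma 3.2.** Let `A` be a *-algebra equipped with inverse square root data `(V, θ)`:
`V` is a subset of the self-adjoint elements containing `0`, `θ` takes self-adjoint values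
on `V`, and (1) `a • θ a = θ a • a`, (2) `a • (θ a • θ a) = 0`, (3) every `a ∈ V` is
quasi-invertible, (4) `θ 0 = 0`.  If `a* • a ∈ V` and `a • a* ∈ V`, then `a` is
quasi-invertible and `u = a • θ (a* • a)` is quasi-unitary, i.e. `u • u* = u* • u = 0`. -/
theorem quasi_unitary_of_inverse_square_root {A : Type*} [NonUnitalRing A] [StarRing A]
    (V : Set A) (θ : A → A)
    (hV0 : (0 : A) ∈ V)
    (hVsa : ∀ a ∈ V, star a = a)
    (hθsa : ∀ a ∈ V, star (θ a) = θ a)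
    (hθ1 : ∀ a ∈ V, qmul a (θ a) = qmul (θ a) a)
    (hθ2 : ∀ a ∈ V, qmul a (qmul (θ a) (θ a)) = 0)
    (hθ3 : ∀ a ∈ V, ∃ a', qmul a a' = 0 ∧ qmul a' a = 0)
    (hθ4 : θ 0 = 0)
    (a : A) (ha : qmul (star a) a ∈ V) (ha' : qmul a (star a) ∈ V) :
    (∃ b : A, qmul a b = 0 ∧ qmul b a = 0) ∧
    qmul (qmul a (θ (qmul (star a) a))) (star (qmul a (θ (qmul (star a) a)))) = 0 ∧
    qmul (star (qmul a (θ (qmul (star a) a)))) (qmul a (θ (qmul (star a) a))) = 0 := by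
  set t := θ (qmul (star a) a)
  have hcomm : qmul (qmul (star a) a) t = qmul t (qmul (star a) a) := hθ1 _ ha
  have hsq : qmul (qmul (star a) a) (qmul t t) = 0 := hθ2 _ ha
  have hleft : qmul (qmul (qmul t t) (star a)) a = 0 := by
    rw [qmul_assoc, qmul_assoc, ← hcomm, ← qmul_assoc, ← hcomm, qmul_assoc, hsq]
  obtain ⟨k, hk, -⟩ := hθ3 _ ha'
  have hright : qmul a (qmul (qmul t t) (star a)) = 0 := by
    rw [qmul_assoc] at hk
    rw [eq_of_qmul_eq_zero hleft hk, hk]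
  have hu : star (qmul a t) = qmul t (star a) := by rw [star_qmul, hθsa _ ha]
  refine ⟨⟨_, hright, hleft⟩, ?_, ?_⟩
  · rw [hu, qmul_assoc, ← qmul_assoc t, hright]
  · rw [hu, qmul_assoc, ← qmul_assoc (star a), hcomm, ← qmul_assoc, ← qmul_assoc, hleft]
end

section
/- Every complex Banach *-algebra A (a complete normed complex algebra with an isometric involution) has the inverse square root property: taking V_A = {a ∈ A : a* = a and ‖a‖ < 1/2}, which is a convex open subset of the self-adjoint elements containing 0, there exists a continuous function θ_A : V_A → A taking self-adjoint values such that (1) a • θ_A(a) = θ_A(a) • a for all a ∈ V_A; (2) a • (θ_A(a) • θ_A(a)) = 0 for all a ∈ V_A; (3) every a ∈ V_A is quasi-invertible; (4) θ_A(0) = 0. (Such a θ_A is given by the power series of the function x ↦ (1+x)^{-1/2} − 1, which has no constant term and radius of convergence 1.) -/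
section BinomialSum

variable {B : Type*} [NormedRing B] [NormedAlgebra ℝ B]

/-- The sum of the binomial series `∑ (r choose n) xⁿ`, which represents `(1 + x) ^ r`. -/
noncomputable def binomialSum (r : ℝ) (x : B) : B := ∑' n : ℕ, Ring.choose r n • x ^ n

theorem summable_norm_choose_mul_pow (r : ℝ) {t : ℝ} (ht0 : 0 ≤ t) (ht : t < 1) :
    Summable fun n : ℕ => ‖Ring.choose r n‖ * t ^ n := by
  lift t to NNReal using ht0
  have h : (t : ENNReal) < (binomialSeries ℝ r).radius :=
    lt_of_lt_of_le (by exact_mod_cast ht) binomialSeries_radius_ge_one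
  simpa [binomialSeries, FormalMultilinearSeries.ofScalars_norm] using
    (binomialSeries ℝ r).summable_norm_mul_pow h

theorem norm_choose_smul_pow_le (r : ℝ) {t : ℝ} {x : B} (hx : ‖x‖ ≤ t) (n : ℕ) :
    ‖Ring.choose r n • x ^ n‖ ≤ max 1 ‖(1 : B)‖ * (‖Ring.choose r n‖ * t ^ n) := by
  have hpow : ‖x ^ n‖ ≤ max 1 ‖(1 : B)‖ * t ^ n := by
    rcases Nat.eq_zero_or_pos n with rfl | hn
    · simp
    · calc ‖x ^ n‖ ≤ ‖x‖ ^ n := norm_pow_le' x hn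
        _ ≤ 1 * t ^ n := by rw [one_mul]; gcongr
        _ ≤ max 1 ‖(1 : B)‖ * t ^ n := by
          have : 0 ≤ t := (norm_nonneg x).trans hx
          gcongr
          exact le_max_left _ _
  calc ‖Ring.choose r n • x ^ n‖ = ‖Ring.choose r n‖ * ‖x ^ n‖ := norm_smul _ _
    _ ≤ ‖Ring.choose r n‖ * (max 1 ‖(1 : B)‖ * t ^ n) := by gcongr
    _ = _ := by ring

theorem summable_norm_choose_smul_pow (r : ℝ) {x : B} (hx : ‖x‖ < 1) :
    Summable fun n : ℕ => ‖Ring.choose r n • x ^ n‖ :=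
  .of_nonneg_of_le (fun _ => norm_nonneg _) (norm_choose_smul_pow_le r le_rfl)
    ((summable_norm_choose_mul_pow r (norm_nonneg x) hx).mul_left _)

theorem binomialSum_zero_left (x : B) : binomialSum 0 x = 1 := by
  rw [binomialSum, tsum_eq_single 0 fun n hn => by simp [Ring.choose_zero_ite, hn]]
  simp

theorem binomialSum_one_left (x : B) : binomialSum 1 x = 1 + x := by
  have hchoose (n : ℕ) : Ring.choose (1 : ℝ) n = (Nat.choose 1 n : ℝ) := by
    simpa using Ring.choose_natCast (R := ℝ) 1 n
  rw [binomialSum, tsum_eq_sum (s := Finset.range 2) fun n hn => ?_]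
  · simp [Finset.sum_range_succ, hchoose]
  · rw [hchoose, Nat.choose_eq_zero_of_lt (by simpa using hn)]
    simp

theorem continuousOn_binomialSum [CompleteSpace B] (r : ℝ) {t : ℝ} (ht0 : 0 ≤ t) (ht : t < 1) :
    ContinuousOn (binomialSum (B := B) r) {x | ‖x‖ ≤ t} :=
  continuousOn_tsum (fun n => by fun_prop)
    ((summable_norm_choose_mul_pow r ht0 ht).mul_left (max 1 ‖(1 : B)‖))
    fun n _ hx => norm_choose_smul_pow_le r hx n

theorem binomialSum_add_left [CompleteSpace B] (r s : ℝ) {x : B} (hx : ‖x‖ < 1) :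
    binomialSum (r + s) x = binomialSum r x * binomialSum s x := by
  simp only [binomialSum]
  rw [tsum_mul_tsum_eq_tsum_sum_antidiagonal_of_summable_norm
    (summable_norm_choose_smul_pow r hx) (summable_norm_choose_smul_pow s hx)]
  refine tsum_congr fun n => ?_
  rw [Ring.add_choose_eq n (Commute.all r s), Finset.sum_smul]
  refine Finset.sum_congr rfl fun ij hij => ?_
  rw [smul_mul_smul_comm, ← pow_add, Finset.HasAntidiagonal.mem_antidiagonal.mp hij]

end BinomialSum

section Unitization

open WithLp

variable {A : Type*} [NonUnitalNormedRing A] [NormedSpace ℝ A]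

/-- The first coordinate of the `ℓ¹`-normed unitization, as a continuous linear map. -/
noncomputable def unitizationFst : WithLp 1 (Unitization ℝ A) →L[ℝ] ℝ :=
  LinearMap.mkContinuous
    { toFun := fun x => (ofLp x).fst
      map_add' := fun _ _ => rfl
      map_smul' := fun _ _ => rfl } 1 fun x => by
    rw [unitization_norm_def, one_mul]
    exact le_add_of_nonneg_right (norm_nonneg _)

/-- The second coordinate of the `ℓ¹`-normed unitization, as a continuous linear map. -/
noncomputable def unitizationSnd : WithLp 1 (Unitization ℝ A) →L[ℝ] A :=
  LinearMap.mkContinuous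
    { toFun := fun x => (ofLp x).snd
      map_add' := fun _ _ => rfl
      map_smul' := fun _ _ => rfl } 1 fun x => by
    rw [unitization_norm_def, one_mul]
    exact le_add_of_nonneg_left (norm_nonneg _)

/-- The inclusion into the `ℓ¹`-normed unitization. -/
abbrev inrL1 (a : A) : WithLp 1 (Unitization ℝ A) := toLp 1 (a : Unitization ℝ A)

variable [IsScalarTower ℝ A A] [SMulCommClass ℝ A A]

theorem ofLp_unitization_pow (x : WithLp 1 (Unitization ℝ A)) (n : ℕ) :
    ofLp (x ^ n) = ofLp x ^ n :=
  map_pow (unitizationAlgEquiv (𝕜 := ℝ) (A := A) ℝ) x n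

theorem inr_qmul (a b : A) :
    ((qmul a b : A) : Unitization ℝ A) = (1 + (a : Unitization ℝ A)) * (1 + b) - 1 := by
  simp only [qmul, Unitization.inr_add, Unitization.inr_mul]
  noncomm_ring

/-- The power series of `x ↦ (1 + x) ^ (-1/2) - 1` evaluated in a non-unital algebra. -/
noncomputable def quasiInvSqrt (a : A) : A :=
  unitizationSnd (binomialSum (-1 / 2) (inrL1 a))

theorem quasiInvSqrt_zero : quasiInvSqrt (0 : A) = 0 := by
  have h : binomialSum (-1 / 2) (0 : WithLp 1 (Unitization ℝ A)) = 1 := by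
    rw [binomialSum, tsum_eq_single 0 fun n hn => by simp [hn]]
    simp
  have h0 : inrL1 (0 : A) = 0 := by simp
  rw [quasiInvSqrt, h0, h]
  exact Unitization.snd_one (R := ℝ) (A := A)

variable [CompleteSpace A]

theorem one_add_inr_quasiInvSqrt {a : A} (ha : ‖a‖ < 1) :
    1 + ((quasiInvSqrt a : A) : Unitization ℝ A) =
      ofLp (binomialSum (-1 / 2) (inrL1 a)) := by
  have hs := (summable_norm_choose_smul_pow (-1 / 2)
    ((unitization_norm_inr (𝕜 := ℝ) a).trans_lt ha)).of_norm
  have hfst : unitizationFst (binomialSum (-1 / 2) (inrL1 a)) = 1 := by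
    have hpow (n : ℕ) : unitizationFst (inrL1 a ^ n) = 0 ^ n := by
      change (ofLp (inrL1 a ^ n)).fst = 0 ^ n
      rw [ofLp_unitization_pow]
      simpa using map_pow (Unitization.fstHom ℝ A) (a : Unitization ℝ A) n
    rw [binomialSum, ContinuousLinearMap.map_tsum _ hs, tsum_eq_single 0]
    · rw [map_smul, hpow]
      simp
    · intro n hn
      rw [map_smul, hpow]
      simp [hn]
  refine Unitization.ext ?_ ?_
  · rw [Unitization.fst_add, Unitization.fst_one, Unitization.fst_inr, add_zero]
    exact hfst.symm
  · rw [Unitization.snd_add, Unitization.snd_one, Unitization.snd_inr, zero_add]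
    rfl

theorem star_quasiInvSqrt [StarRing A] [NormedStarGroup A] {a : A} (ha : ‖a‖ < 1)
    (hstar : star a = a) : star (quasiInvSqrt a) = quasiInvSqrt a := by
  have : StarModule ℝ A :=
    ⟨fun c x => by simpa using map_real_smul (starAddEquiv : A ≃+ A) continuous_star c x⟩
  have hs := (summable_norm_choose_smul_pow (-1 / 2)
    ((unitization_norm_inr (𝕜 := ℝ) a).trans_lt ha)).of_norm
  rw [quasiInvSqrt, binomialSum, ContinuousLinearMap.map_tsum _ hs, tsum_star]
  refine tsum_congr fun n => ?_
  rw [map_smul, star_smul, star_trivial]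
  congr 1
  change star (ofLp (inrL1 a ^ n)).snd = (ofLp (inrL1 a ^ n)).snd
  rw [ofLp_unitization_pow]
  have hsa : IsSelfAdjoint (a : Unitization ℝ A) := by
    rw [IsSelfAdjoint, ← Unitization.inr_star, hstar]
  exact congrArg (fun y : Unitization ℝ A => y.snd) (hsa.pow n).star_eq

theorem continuousOn_quasiInvSqrt {t : ℝ} (ht0 : 0 ≤ t) (ht : t < 1) :
    ContinuousOn (quasiInvSqrt (A := A)) {a | ‖a‖ ≤ t} :=
  unitizationSnd.continuous.comp_continuousOn <|
    (continuousOn_binomialSum (-1 / 2) ht0 ht).comp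
      (unitization_isometry_inr (𝕜 := ℝ) (A := A)).continuous.continuousOn
      fun a ha => (unitization_norm_inr (𝕜 := ℝ) a).trans_le ha

theorem qmul_quasiInvSqrt_comm {a : A} (ha : ‖a‖ < 1) :
    qmul a (quasiInvSqrt a) = qmul (quasiInvSqrt a) a := by
  have hx := (unitization_norm_inr (𝕜 := ℝ) a).trans_lt ha
  have h : binomialSum 1 (inrL1 a) * binomialSum (-1 / 2) (inrL1 a) =
      binomialSum (-1 / 2) (inrL1 a) * binomialSum 1 (inrL1 a) := by
    rw [← binomialSum_add_left _ _ hx, ← binomialSum_add_left _ _ hx, add_comm]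
  rw [binomialSum_one_left] at h
  apply Unitization.inr_injective (R := ℝ)
  rw [inr_qmul, inr_qmul, one_add_inr_quasiInvSqrt ha]
  exact congrArg (fun y => ofLp y - 1) h

theorem qmul_qmul_quasiInvSqrt {a : A} (ha : ‖a‖ < 1) :
    qmul a (qmul (quasiInvSqrt a) (quasiInvSqrt a)) = 0 ∧
      qmul (qmul (quasiInvSqrt a) (quasiInvSqrt a)) a = 0 := by
  have hx := (unitization_norm_inr (𝕜 := ℝ) a).trans_lt ha
  have hl : binomialSum 1 (inrL1 a) *
      (binomialSum (-1 / 2) (inrL1 a) * binomialSum (-1 / 2) (inrL1 a)) = 1 := by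
    rw [← binomialSum_add_left _ _ hx, ← binomialSum_add_left _ _ hx,
      ← binomialSum_zero_left (inrL1 a)]
    norm_num
  have hr : (binomialSum (-1 / 2) (inrL1 a) *
      binomialSum (-1 / 2) (inrL1 a)) * binomialSum 1 (inrL1 a) = 1 := by
    rw [← binomialSum_add_left _ _ hx, ← binomialSum_add_left _ _ hx,
      ← binomialSum_zero_left (inrL1 a)]
    norm_num
  rw [binomialSum_one_left] at hl hr
  constructor <;> apply Unitization.inr_injective (R := ℝ) <;>
    rw [inr_qmul, inr_qmul, add_sub_cancel, one_add_inr_quasiInvSqrt ha, Unitization.inr_zero,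
      sub_eq_zero]
  · exact congrArg ofLp hl
  · exact congrArg ofLp hr

end Unitization

/-- **Example 3.4.** Every complex Banach *-algebra (a complete normed complex algebra,
possibly non-unital, with an isometric involution) has the inverse square root property,
with `V = {a : star a = a ∧ ‖a‖ < 1/2}`: this set is a convex subset of the self-adjoint
elements, open in the set of self-adjoint elements, containing `0`, and there is a
continuous `θ : V → A` with self-adjoint values such that (1) `a • θ a = θ a • a`,
(2) `a • (θ a • θ a) = 0`, (3) every `a ∈ V` is quasi-invertible, and (4) `θ 0 = 0`. -/
theorem banach_star_algebra_inverse_square_root {A : Type*} [NonUnitalNormedRing A]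
    [StarRing A] [NormedStarGroup A] [CompleteSpace A]
    [NormedSpace ℂ A] [IsScalarTower ℂ A A] [SMulCommClass ℂ A A] :
    (0 : A) ∈ {a : A | star a = a ∧ ‖a‖ < 1 / 2} ∧
    {a : A | star a = a ∧ ‖a‖ < 1 / 2} ⊆ {a : A | star a = a} ∧
    Convex ℝ {a : A | star a = a ∧ ‖a‖ < 1 / 2} ∧
    (∃ U : Set A, IsOpen U ∧
      {a : A | star a = a ∧ ‖a‖ < 1 / 2} = U ∩ {a : A | star a = a}) ∧
    ∃ θ : A → A,
      ContinuousOn θ {a : A | star a = a ∧ ‖a‖ < 1 / 2} ∧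
      (∀ a ∈ {a : A | star a = a ∧ ‖a‖ < 1 / 2}, star (θ a) = θ a) ∧
      (∀ a ∈ {a : A | star a = a ∧ ‖a‖ < 1 / 2}, qmul a (θ a) = qmul (θ a) a) ∧
      (∀ a ∈ {a : A | star a = a ∧ ‖a‖ < 1 / 2}, qmul a (qmul (θ a) (θ a)) = 0) ∧
      (∀ a ∈ {a : A | star a = a ∧ ‖a‖ < 1 / 2}, ∃ a', qmul a a' = 0 ∧ qmul a' a = 0) ∧
      θ 0 = 0 := by
  refine ⟨by simp, fun a ha => ha.1, ?_, ⟨Metric.ball 0 (1 / 2), Metric.isOpen_ball, ?_⟩,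
    quasiInvSqrt, ?_, ?_, ?_, ?_, ?_, quasiInvSqrt_zero⟩
  · have hstar (c : ℝ) (x : A) : star (c • x) = c • star x :=
      map_real_smul (starAddEquiv : A ≃+ A) continuous_star c x
    have hball : Convex ℝ {a : A | ‖a‖ < 1 / 2} := by
      simpa [Metric.ball, dist_zero_right] using convex_ball (0 : A) (1 / 2)
    refine Convex.inter (s := {a : A | star a = a}) ?_ hball
    intro x hx y hy c d _ _ _
    simp only [Set.mem_ofPred_eq] at hx hy ⊢
    rw [star_add, hstar, hstar, hx, hy]
  · ext a
    simp [and_comm]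
  · exact (continuousOn_quasiInvSqrt (by norm_num) (by norm_num)).mono fun a ha => ha.2.le
  · exact fun a ha => star_quasiInvSqrt (ha.2.trans (by norm_num)) ha.1
  · exact fun a ha => qmul_quasiInvSqrt_comm (ha.2.trans (by norm_num))
  · exact fun a ha => (qmul_qmul_quasiInvSqrt (ha.2.trans (by norm_num))).1
  · exact fun a ha => ⟨_, qmul_qmul_quasiInvSqrt (ha.2.trans (by norm_num))⟩
end
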